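/- Let W : H_{Q0} → H_Q⊗H_E be an isometry (all spaces finite-dimensional) and let 𝒲 : L(H_{Q0}) → L(H_Q) be the induced channel 𝒲(σ) = Tr_E[W σ W†]. Suppose 𝒲 is invertible on its range by a channel, i.e., there exists a CPTP map 𝒲' : L(H_Q) → L(H_{Q0}) with 𝒲'∘𝒲 = id_{L(H_{Q0})}. Then for every finite-dimensional H_R and every state ω_{RQ0} on H_R⊗H_{Q0}, the state ρ_RQE := (1_R⊗W) ω_{RQ0} (1_R⊗W)† on H_R⊗H_Q⊗H_E satisfies I(R;E|Q)_ρ = 0. -/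

import Mathlib

open Matrix Kronecker ComplexOrder

noncomputable section

/-- Von Neumann entropy `S(ρ) = -Tr[ρ log ρ]`, computed from the eigenvalues
(junk value `0` if `ρ` is not Hermitian). -/
def vnEntropy {n : Type*} [Fintype n] [DecidableEq n] (ρ : Matrix n n ℂ) : ℝ :=
  if h : ρ.IsHermitian then ∑ i, Real.negMulLog (h.eigenvalues i) else 0

/-- Partial trace over the first tensor factor. -/
def ptraceLeft {A B : Type*} [Fintype A] (M : Matrix (A × B) (A × B) ℂ) : Matrix B B ℂ :=
  Matrix.of fun x y => ∑ a, M (a, x) (a, y)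

/-- Partial trace over the second tensor factor. -/
def ptraceRight {A B : Type*} [Fintype B] (M : Matrix (A × B) (A × B) ℂ) : Matrix A A ℂ :=
  Matrix.of fun x y => ∑ b, M (x, b) (y, b)

/-- Partial trace over the last factor of a tripartite operator on `R ⊗ Q ⊗ E`. -/
def ptrace3E {R Q E : Type*} [Fintype E] (M : Matrix (R × Q × E) (R × Q × E) ℂ) :
    Matrix (R × Q) (R × Q) ℂ :=
  Matrix.of fun x y => ∑ e, M (x.1, x.2, e) (y.1, y.2, e)

/-- A state is a positive semidefinite operator with unit trace. -/
def IsState {n : Type*} [Fintype n] (ρ : Matrix n n ℂ) : Prop :=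
  ρ.PosSemidef ∧ ρ.trace = 1

/-- Quantum mutual information `I(A;B) = S(ρ_A) + S(ρ_B) - S(ρ_AB)`. -/
def mutualInfo {A B : Type*} [Fintype A] [DecidableEq A] [Fintype B] [DecidableEq B]
    (ρ : Matrix (A × B) (A × B) ℂ) : ℝ :=
  vnEntropy (ptraceRight ρ) + vnEntropy (ptraceLeft ρ) - vnEntropy ρ

/-- Conditional quantum mutual information
`I(R;E|Q) = S(ρ_RQ) + S(ρ_QE) - S(ρ_RQE) - S(ρ_Q)`. -/
def condMutualInfo {R Q E : Type*} [Fintype R] [DecidableEq R] [Fintype Q] [DecidableEq Q]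
    [Fintype E] [DecidableEq E] (ρ : Matrix (R × Q × E) (R × Q × E) ℂ) : ℝ :=
  vnEntropy (ptrace3E ρ) + vnEntropy (ptraceLeft ρ) - vnEntropy ρ
    - vnEntropy (ptraceLeft (ptrace3E ρ))

/-- The map `id_n ⊗ Φ` obtained by applying `Φ` blockwise. -/
def idTensor {A B : Type*} (n : Type*) (Φ : Matrix A A ℂ →ₗ[ℂ] Matrix B B ℂ)
    (M : Matrix (n × A) (n × A) ℂ) : Matrix (n × B) (n × B) ℂ :=
  Matrix.of fun x y => Φ (Matrix.of fun a b => M (x.1, a) (y.1, b)) x.2 y.2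

/-- Complete positivity: for every `k`, `id_{Fin k} ⊗ Φ` preserves positive semidefiniteness. -/
def IsCPMap {A B : Type*} [Fintype A] [Fintype B]
    (Φ : Matrix A A ℂ →ₗ[ℂ] Matrix B B ℂ) : Prop :=
  ∀ (k : ℕ) (M : Matrix (Fin k × A) (Fin k × A) ℂ), M.PosSemidef →
    (idTensor (Fin k) Φ M).PosSemidef

/-- A CPTP map (quantum channel). -/
def IsCPTP {A B : Type*} [Fintype A] [Fintype B]
    (Φ : Matrix A A ℂ →ₗ[ℂ] Matrix B B ℂ) : Prop :=
  IsCPMap Φ ∧ ∀ M : Matrix A A ℂ, (Φ M).trace = M.trace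

/-- The family of states on `Q ⊗ E` steered from `R` by measurements on a tripartite state. -/
def steered {R Q E : Type*} [Fintype R] [Fintype Q] [DecidableEq Q] [Fintype E] [DecidableEq E]
    (ρ : Matrix (R × Q × E) (R × Q × E) ℂ) : Set (Matrix (Q × E) (Q × E) ℂ) :=
  { ω | ∃ P : Matrix R R ℂ, P.PosSemidef ∧
      (ptraceLeft ((P ⊗ₖ (1 : Matrix (Q × E) (Q × E) ℂ)) * ρ)).trace ≠ 0 ∧
      ω = ((ptraceLeft ((P ⊗ₖ (1 : Matrix (Q × E) (Q × E) ℂ)) * ρ)).trace)⁻¹ •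
            ptraceLeft ((P ⊗ₖ (1 : Matrix (Q × E) (Q × E) ℂ)) * ρ) }

/-- A post-selected family of bipartite system-environment states: the normalized
output state space of some completely positive map `𝒫 : Q₀E₀ → QE`. -/
def IsPostSelected {Q E : Type*} [Fintype Q] [Fintype E]
    (S : Set (Matrix (Q × E) (Q × E) ℂ)) : Prop :=
  ∃ (n0 m0 : ℕ)
    (P : Matrix (Fin n0 × Fin m0) (Fin n0 × Fin m0) ℂ →ₗ[ℂ] Matrix (Q × E) (Q × E) ℂ),
    IsCPMap P ∧
    S = { ω | ∃ ρ0, IsState ρ0 ∧ (P ρ0).trace ≠ 0 ∧ ω = ((P ρ0).trace)⁻¹ • P ρ0 }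

section Entropy

open Polynomial

variable {m n : Type*} [Fintype m] [DecidableEq m] [Fintype n] [DecidableEq n]

lemma vnEntropy_eq_sum_roots {A : Matrix n n ℂ} (hA : A.IsHermitian) :
    vnEntropy A = (A.charpoly.roots.map fun z => Real.negMulLog z.re).sum := by
  rw [vnEntropy, dif_pos hA, hA.roots_charpoly_eq_eigenvalues, Multiset.map_map]
  simp

/-- Zero eigenvalues do not contribute to the entropy. -/
lemma vnEntropy_eq_of_X_pow_mul_charpoly_eq {A : Matrix m m ℂ} {B : Matrix n n ℂ}
    (hA : A.IsHermitian) (hB : B.IsHermitian) {j k : ℕ}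
    (h : X ^ j * A.charpoly = X ^ k * B.charpoly) : vnEntropy A = vnEntropy B := by
  have key := congrArg (fun p : ℂ[X] => (p.roots.map fun z => Real.negMulLog z.re).sum) h
  rw [roots_mul (mul_ne_zero (pow_ne_zero _ X_ne_zero) A.charpoly_monic.ne_zero),
    roots_mul (mul_ne_zero (pow_ne_zero _ X_ne_zero) B.charpoly_monic.ne_zero)] at key
  simpa [Multiset.map_nsmul, Multiset.sum_nsmul, vnEntropy_eq_sum_roots hA,
    vnEntropy_eq_sum_roots hB] using key

lemma vnEntropy_mul_comm (A : Matrix m n ℂ) (B : Matrix n m ℂ)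
    (hAB : (A * B).IsHermitian) (hBA : (B * A).IsHermitian) :
    vnEntropy (A * B) = vnEntropy (B * A) :=
  vnEntropy_eq_of_X_pow_mul_charpoly_eq hAB hBA (charpoly_mul_comm' A B)

lemma vnEntropy_isometry_conj {V : Matrix m n ℂ} (hV : Vᴴ * V = 1) {A : Matrix n n ℂ}
    (hA : A.IsHermitian) : vnEntropy (V * A * Vᴴ) = vnEntropy A := by
  have h : Vᴴ * (V * A) = A := by rw [← Matrix.mul_assoc, hV, Matrix.one_mul]
  rw [vnEntropy_mul_comm _ _ (isHermitian_mul_mul_conjTranspose _ hA) (by rwa [h]), h]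

lemma vnEntropy_diagonal (d : n → ℝ) :
    vnEntropy (diagonal fun i => (d i : ℂ)) = ∑ i, Real.negMulLog (d i) := by
  rw [vnEntropy_eq_sum_roots (by
    rw [isHermitian_diagonal_iff]; intro i; simp [IsSelfAdjoint]), charpoly_diagonal,
    roots_prod _ _ (by simp [Finset.prod_ne_zero_iff, X_sub_C_ne_zero])]
  simp

lemma vnEntropy_kronecker {A : Matrix m m ℂ} {B : Matrix n n ℂ} (hA : A.IsHermitian)
    (hB : B.IsHermitian) (hAtr : A.trace = 1) (hBtr : B.trace = 1) :
    vnEntropy (A ⊗ₖ B) = vnEntropy A + vnEntropy B := by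
  let U : Matrix m m ℂ := ↑hA.eigenvectorUnitary
  let V : Matrix n n ℂ := ↑hB.eigenvectorUnitary
  have hUU : Uᴴ * U = 1 := Unitary.coe_star_mul_self hA.eigenvectorUnitary
  have hVV : Vᴴ * V = 1 := Unitary.coe_star_mul_self hB.eigenvectorUnitary
  have hAB : A ⊗ₖ B = (U ⊗ₖ V) *
      diagonal (fun i : m × n => ((hA.eigenvalues i.1 * hB.eigenvalues i.2 : ℝ) : ℂ)) *
      (U ⊗ₖ V)ᴴ := by
    have hd : diagonal (fun i : m × n => ((hA.eigenvalues i.1 * hB.eigenvalues i.2 : ℝ) : ℂ)) =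
        diagonal (fun i => (hA.eigenvalues i : ℂ)) ⊗ₖ
          diagonal (fun i => (hB.eigenvalues i : ℂ)) := by
      rw [diagonal_kronecker_diagonal]; simp
    rw [hd, conjTranspose_kronecker, ← mul_kronecker_mul, ← mul_kronecker_mul]
    exact congrArg₂ _ hA.spectral_theorem hB.spectral_theorem
  have hW : (U ⊗ₖ V)ᴴ * (U ⊗ₖ V) = 1 := by
    rw [conjTranspose_kronecker, ← mul_kronecker_mul, hUU, hVV, one_kronecker_one]
  have hsA : ∑ i, hA.eigenvalues i = 1 := by
    simpa [hA.trace_eq_sum_eigenvalues] using congrArg Complex.re hAtr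
  have hsB : ∑ i, hB.eigenvalues i = 1 := by
    simpa [hB.trace_eq_sum_eigenvalues] using congrArg Complex.re hBtr
  rw [hAB, vnEntropy_isometry_conj hW (by
    rw [isHermitian_diagonal_iff]; intro i; simp [IsSelfAdjoint]), vnEntropy_diagonal,
    vnEntropy, dif_pos hA, vnEntropy, dif_pos hB, Fintype.sum_prod_type]
  simp only [Real.negMulLog_mul, Finset.sum_add_distrib, ← Finset.mul_sum, ← Finset.sum_mul,
    hsA, hsB, one_mul]

end Entropy

section KnillLaflamme

variable {A B E : Type*}

/-- The block `⟨e| W` of an operator `W` into `B ⊗ E`. -/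
def envBlock (W : Matrix (B × E) A ℂ) (e : E) : Matrix B A ℂ :=
  Matrix.of fun b a => W (b, e) a

lemma ptraceRight_conj_eq_sum [Fintype A] [Fintype E] (W : Matrix (B × E) A ℂ) (σ : Matrix A A ℂ) :
    ptraceRight (W * σ * Wᴴ) = ∑ e, envBlock W e * σ * (envBlock W e)ᴴ := by
  ext x y
  simp [ptraceRight, envBlock, Matrix.mul_apply, Matrix.sum_apply]

lemma sum_conjTranspose_envBlock_mul [Fintype B] [Fintype E] (W : Matrix (B × E) A ℂ) :
    ∑ e, (envBlock W e)ᴴ * envBlock W e = Wᴴ * W := by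
  ext x y
  simp [envBlock, Matrix.mul_apply, Matrix.sum_apply, Fintype.sum_prod_type_right]

variable [Fintype A] [DecidableEq A] [Fintype B]

open scoped MatrixOrder in
lemma IsCPMap.exists_kraus [DecidableEq B] {Φ : Matrix A A ℂ →ₗ[ℂ] Matrix B B ℂ} (hΦ : IsCPMap Φ) :
    ∃ (k : ℕ) (K : Fin k × B → Matrix B A ℂ), ∀ X, Φ X = ∑ s, K s * X * (K s)ᴴ := by
  let v : Fin (Fintype.card A) × A → ℂ := fun x => if x.1 = Fintype.equivFin A x.2 then 1 else 0
  have hJ := hΦ _ _ (posSemidef_vecMulVec_self_star v)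
  obtain ⟨S, hS⟩ := CStarAlgebra.nonneg_iff_eq_star_mul_self.mp hJ.nonneg
  refine ⟨Fintype.card A, fun s => Matrix.of fun b a => star (S s (Fintype.equivFin A a, b)), ?_⟩
  have hsingle : ∀ a a' b b', Φ (single a a' 1) b b' =
      ∑ s, star (S s (Fintype.equivFin A a, b)) * S s (Fintype.equivFin A a', b') := by
    intro a a' b b'
    have h := congrFun₂ hS (Fintype.equivFin A a, b) (Fintype.equivFin A a', b')
    have hs : (Matrix.of fun x y => vecMulVec v (star v) (Fintype.equivFin A a, x)
        (Fintype.equivFin A a', y)) = single a a' (1 : ℂ) := by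
      ext x y
      simp only [v, vecMulVec_apply, single_apply, Matrix.of_apply, Pi.star_apply,
        EmbeddingLike.apply_eq_iff_eq]
      split_ifs <;> simp_all
    simpa [idTensor, hs, Matrix.mul_apply, star_eq_conjTranspose] using h
  intro X
  ext b b'
  conv_lhs => rw [matrix_eq_sum_single X]
  have hx : ∀ a a', single a a' (X a a') = X a a' • single a a' (1 : ℂ) := by
    intro a a'; simp [smul_single]
  simp only [hx, map_sum, map_smul, Matrix.sum_apply, Matrix.smul_apply, hsingle, smul_eq_mul,
    Matrix.mul_apply, Matrix.of_apply, conjTranspose_apply, star_star, Finset.mul_sum,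
    Finset.sum_mul]
  rw [Finset.sum_comm_cycle]
  refine Finset.sum_congr rfl fun s _ => ?_
  rw [Finset.sum_comm]
  exact Finset.sum_congr rfl fun _ _ => Finset.sum_congr rfl fun _ _ => by ring

/-- Kraus operators of a trace preserving map resolve the identity. -/
lemma sum_kraus_eq_one {ι : Type*} [Fintype ι] (K : ι → Matrix B A ℂ)
    (h : ∀ X : Matrix A A ℂ, (∑ s, K s * X * (K s)ᴴ).trace = X.trace) :
    ∑ s, (K s)ᴴ * K s = 1 := by
  refine ext_iff_trace_mul_right.mpr fun X => ?_
  rw [Matrix.one_mul, ← h X, Finset.sum_mul, trace_sum, trace_sum]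
  refine Finset.sum_congr rfl fun s _ => ?_
  rw [Matrix.mul_assoc, trace_mul_comm]

/-- All Kraus operators of the identity channel are scalar. -/
lemma kraus_id_scalar {ι : Type*} [Fintype ι] (N : ι → Matrix A A ℂ)
    (h : ∀ X : Matrix A A ℂ, ∑ s, N s * X * (N s)ᴴ = X) (s : ι) :
    ∃ c : ℂ, N s = c • (1 : Matrix A A ℂ) := by
  have hsum : ∀ a b c d, ∑ s, N s a c * star (N s b d) = single c d (1 : ℂ) a b := by
    intro a b c d
    rw [← h (single c d 1)]
    simp [Matrix.sum_apply, Matrix.mul_apply, single_apply, ite_and]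
  have hzero : ∀ f : ι → ℂ, ∑ s, f s * star (f s) = 0 → ∀ s, f s = 0 := by
    intro f hf s
    have := (Finset.sum_eq_zero_iff_of_nonneg
      fun i _ => mul_star_self_nonneg (f i)).mp hf s (Finset.mem_univ s)
    simpa using this
  have hoff : ∀ a c, a ≠ c → N s a c = 0 := fun a c hac =>
    hzero (fun s => N s a c) ((hsum a a c c).trans (by simp [hac.symm])) s
  have hdiag : ∀ a b, N s a a = N s b b := fun a b => sub_eq_zero.mp <|
    hzero (fun s => N s a a - N s b b) (by
      have : ∀ s, (N s a a - N s b b) * star (N s a a - N s b b) =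
        N s a a * star (N s a a) - N s a a * star (N s b b) - N s b b * star (N s a a)
          + N s b b * star (N s b b) := fun s => by rw [star_sub]; ring
      simp only [this, Finset.sum_add_distrib, Finset.sum_sub_distrib, hsum]
      simp) s
  rcases isEmpty_or_nonempty A with _ | ⟨⟨a₀⟩⟩
  · exact ⟨0, Subsingleton.elim _ _⟩
  · refine ⟨N s a₀ a₀, ?_⟩
    ext a b
    by_cases hab : a = b
    · subst hab; simp [hdiag a a₀]
    · simp [hoff a b hab, hab]

/-- The Knill–Laflamme condition is necessary for correctability. -/
lemma knill_laflamme [DecidableEq B] [Fintype E]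
    (W : Matrix (B × E) A ℂ) {Φ : Matrix B B ℂ →ₗ[ℂ] Matrix A A ℂ}
    (hΦ : IsCPTP Φ) (hInv : ∀ σ, Φ (ptraceRight (W * σ * Wᴴ)) = σ) :
    ∃ C : Matrix E E ℂ, C.IsHermitian ∧
      ∀ e f, (envBlock W e)ᴴ * envBlock W f = C e f • (1 : Matrix A A ℂ) := by
  obtain ⟨k, K, hK⟩ := hΦ.1.exists_kraus
  have hone := sum_kraus_eq_one K fun X => by rw [← hK, hΦ.2]
  have hscal := kraus_id_scalar (fun p : (Fin k × A) × E => K p.1 * envBlock W p.2) fun X => by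
    conv_rhs => rw [← hInv X, hK, ptraceRight_conj_eq_sum]
    rw [Fintype.sum_prod_type]
    simp [Matrix.mul_sum, Matrix.sum_mul, Matrix.mul_assoc]
  choose c hc using hscal
  refine ⟨Matrix.of fun e f => ∑ s, star (c (s, e)) * c (s, f), ?_, fun e f => ?_⟩
  · ext e f
    simp [mul_comm]
  · calc (envBlock W e)ᴴ * envBlock W f
        = (envBlock W e)ᴴ * (∑ s, (K s)ᴴ * K s) * envBlock W f := by rw [hone, Matrix.mul_one]
      _ = ∑ s, (K s * envBlock W e)ᴴ * (K s * envBlock W f) := by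
          simp [Matrix.mul_sum, Matrix.sum_mul, Matrix.mul_assoc]
      _ = _ := by
          simp only [fun s e => hc (s, e), conjTranspose_smul, conjTranspose_one, smul_mul_smul_comm,
            Matrix.mul_one, Matrix.of_apply, Finset.sum_smul]

/-- For a correctable isometry, the output marginal has the spectrum of `σ ⊗ C`. -/
lemma vnEntropy_ptraceRight_conj [DecidableEq B] [Fintype E] [DecidableEq E]
    (W : Matrix (B × E) A ℂ) {C : Matrix E E ℂ}
    (hC : C.IsHermitian) (hCtr : C.trace = 1)
    (hKL : ∀ e f, (envBlock W e)ᴴ * envBlock W f = C e f • (1 : Matrix A A ℂ))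
    {σ : Matrix A A ℂ} (hσ : σ.IsHermitian) (hσtr : σ.trace = 1) :
    vnEntropy (ptraceRight (W * σ * Wᴴ)) = vnEntropy σ + vnEntropy C := by
  let K : Matrix B (A × E) ℂ := Matrix.of fun b x => W (b, x.2) x.1
  have hKK : Kᴴ * K = (1 : Matrix A A ℂ) ⊗ₖ C := by
    ext ⟨a, e⟩ ⟨a', f⟩
    have h := congrFun₂ (hKL e f) a a'
    simpa [K, envBlock, Matrix.mul_apply, mul_comm] using h
  have hpt : ptraceRight (W * σ * Wᴴ) = K * (σ ⊗ₖ (1 : Matrix E E ℂ)) * Kᴴ := by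
    ext x y
    simp [K, ptraceRight, Matrix.mul_apply, Fintype.sum_prod_type_right, Matrix.one_apply]
  have hcomm : Kᴴ * (K * (σ ⊗ₖ (1 : Matrix E E ℂ))) = σ ⊗ₖ C := by
    rw [← Matrix.mul_assoc, hKK, ← mul_kronecker_mul, Matrix.one_mul, Matrix.mul_one]
  have hσC : (σ ⊗ₖ C).IsHermitian := by
    rw [IsHermitian, conjTranspose_kronecker, hσ.eq, hC.eq]
  have hσ1 : (σ ⊗ₖ (1 : Matrix E E ℂ)).IsHermitian := by
    rw [IsHermitian, conjTranspose_kronecker, hσ.eq, conjTranspose_one]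
  rw [hpt, vnEntropy_mul_comm _ _ (isHermitian_mul_mul_conjTranspose _ hσ1) (by rwa [hcomm]),
    hcomm, vnEntropy_kronecker hσ hC hσtr hCtr]

end KnillLaflamme

section Reference

variable {R A B E : Type*}

lemma ptraceLeft_one_kronecker_conj [Fintype R] [DecidableEq R] [Fintype A]
    (W : Matrix B A ℂ) (ω : Matrix (R × A) (R × A) ℂ) :
    ptraceLeft (((1 : Matrix R R ℂ) ⊗ₖ W) * ω * ((1 : Matrix R R ℂ) ⊗ₖ W)ᴴ) =
      W * ptraceLeft ω * Wᴴ := by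
  ext x y
  simp only [ptraceLeft, Matrix.mul_apply, Matrix.of_apply, conjTranspose_apply,
    kroneckerMap_apply, Fintype.sum_prod_type, Matrix.one_apply, ite_mul, one_mul, zero_mul,
    Finset.sum_ite_irrel, Finset.sum_const_zero, Finset.sum_ite_eq, Finset.mem_univ, if_true,
    apply_ite star, star_zero, mul_ite, mul_zero, Finset.sum_mul, Finset.mul_sum]
  rw [Finset.sum_comm]
  refine Finset.sum_congr rfl fun _ _ => ?_
  rw [Finset.sum_comm]

/-- `1_R ⊗ W` with its output regrouped as `(R ⊗ B) ⊗ E`. -/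
def refExtend (R : Type*) [DecidableEq R] {A B E : Type*} (W : Matrix (B × E) A ℂ) :
    Matrix ((R × B) × E) (R × A) ℂ :=
  ((1 : Matrix R R ℂ) ⊗ₖ W).submatrix (Equiv.prodAssoc R B E) id

lemma envBlock_refExtend [DecidableEq R] (W : Matrix (B × E) A ℂ) (e : E) :
    envBlock (refExtend R W) e = (1 : Matrix R R ℂ) ⊗ₖ envBlock W e := by
  ext ⟨r, b⟩ ⟨r', a⟩
  simp [envBlock, refExtend]

lemma ptrace3E_one_kronecker_conj [Fintype R] [DecidableEq R] [Fintype A] [Fintype E]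
    (W : Matrix (B × E) A ℂ) (ω : Matrix (R × A) (R × A) ℂ) :
    ptrace3E (((1 : Matrix R R ℂ) ⊗ₖ W) * ω * ((1 : Matrix R R ℂ) ⊗ₖ W)ᴴ) =
      ptraceRight (refExtend R W * ω * (refExtend R W)ᴴ) := by
  ext x y
  simp [ptrace3E, ptraceRight, refExtend, Matrix.mul_apply]

lemma ptraceLeft_ptrace3E [Fintype R] [Fintype E] (M : Matrix (R × B × E) (R × B × E) ℂ) :
    ptraceLeft (ptrace3E M) = ptraceRight (ptraceLeft M) := by
  ext x y
  simp only [ptraceLeft, ptrace3E, ptraceRight, Matrix.of_apply]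
  exact Finset.sum_comm

lemma ptraceLeft_isHermitian [Fintype R] {ω : Matrix (R × A) (R × A) ℂ} (hω : ω.IsHermitian) :
    (ptraceLeft ω).IsHermitian := by
  ext x y
  simp [ptraceLeft, hω.apply]

lemma trace_ptraceLeft [Fintype R] [Fintype A] (ω : Matrix (R × A) (R × A) ℂ) :
    (ptraceLeft ω).trace = ω.trace := by
  simp only [Matrix.trace, ptraceLeft, Matrix.diag_apply, Matrix.of_apply,
    Fintype.sum_prod_type_right]

end Reference

/-- If `W : Q₀ → Q ⊗ E` is an isometry whose induced channel
`𝒲(σ) = Tr_E[W σ W†]` is invertible by a CPTP map, then for every reference `R` and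
every state `ω_{RQ₀}`, the state `(1_R ⊗ W) ω (1_R ⊗ W)†` is a Markov state. -/
theorem stmt15 {Q0 Q E : Type} [Fintype Q0] [DecidableEq Q0] [Fintype Q] [DecidableEq Q]
    [Fintype E] [DecidableEq E]
    (W : Matrix (Q × E) Q0 ℂ) (hW : Wᴴ * W = 1)
    (W' : Matrix Q Q ℂ →ₗ[ℂ] Matrix Q0 Q0 ℂ) (hW' : IsCPTP W')
    (hInv : ∀ σ : Matrix Q0 Q0 ℂ, W' (ptraceRight (W * σ * Wᴴ)) = σ) :
    ∀ (R : Type) [Fintype R] [DecidableEq R] (ω : Matrix (R × Q0) (R × Q0) ℂ),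
      IsState ω →
      condMutualInfo (((1 : Matrix R R ℂ) ⊗ₖ W) * ω * ((1 : Matrix R R ℂ) ⊗ₖ W)ᴴ) = 0 := by
  intro R _ _ ω ⟨hω, hωtr⟩
  obtain ⟨C, hC, hKL⟩ := knill_laflamme W hW' hInv
  have hne : Nonempty Q0 := by
    by_contra hemp
    rw [not_nonempty_iff] at hemp
    simp [Matrix.trace] at hωtr
  have hCtr : C.trace = 1 := by
    obtain ⟨a⟩ := hne
    have h := congrFun₂ ((sum_conjTranspose_envBlock_mul W).trans hW) a a
    simpa [hKL, Matrix.sum_apply, Matrix.trace] using h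
  have hKLR : ∀ e f, (envBlock (refExtend R W) e)ᴴ * envBlock (refExtend R W) f =
      C e f • (1 : Matrix (R × Q0) (R × Q0) ℂ) := fun e f => by
    rw [envBlock_refExtend, envBlock_refExtend, conjTranspose_kronecker, ← mul_kronecker_mul, hKL,
      conjTranspose_one, Matrix.one_mul, kronecker_smul, one_kronecker_one]
  have hWR : ((1 : Matrix R R ℂ) ⊗ₖ W)ᴴ * ((1 : Matrix R R ℂ) ⊗ₖ W) = 1 := by
    rw [conjTranspose_kronecker, ← mul_kronecker_mul, hW, conjTranspose_one, Matrix.one_mul,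
      one_kronecker_one]
  have hσ := ptraceLeft_isHermitian hω.isHermitian
  rw [condMutualInfo, ptraceLeft_ptrace3E, ptraceLeft_one_kronecker_conj,
    ptrace3E_one_kronecker_conj, vnEntropy_isometry_conj hWR hω.isHermitian,
    vnEntropy_isometry_conj hW hσ,
    vnEntropy_ptraceRight_conj _ hC hCtr hKLR hω.isHermitian hωtr,
    vnEntropy_ptraceRight_conj _ hC hCtr hKL hσ (by rw [trace_ptraceLeft, hωtr])]
  ring
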